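/- Suppose f is irreducible in ℤ[u^{±1}] and noncyclotomic. Then the topological entropies satisfy h(σ̄|_{Ȳ_f}) = h(σ̄|_{Z̄_f}) = h(α_f), where entropy on Ȳ_f and Z̄_f is taken with respect to the restriction of the shift σ̄ and the topology of coordinatewise convergence, and h(α_f) is the topological entropy of α_f on X_f. -/

import Mathlib

open Filter Topology Polynomial

noncomputable section

/-- `f(σ̄)` on real sequences. -/
def fsR (f : Polynomial ℤ) (w : ℤ → ℝ) : ℤ → ℝ :=
  fun n => ∑ k ∈ Finset.range (f.natDegree + 1), (f.coeff k : ℝ) * w (n + (k : ℤ))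

/-- Bounded real sequences. -/
def Bdd (w : ℤ → ℝ) : Prop := ∃ B : ℝ, ∀ n, |w n| ≤ B

/-- `f` is noncyclotomic. -/
def Noncyclotomic (f : Polynomial ℤ) : Prop :=
  ∀ θ : ℂ, Polynomial.aeval θ f = 0 → ∀ n : ℕ, 0 < n → θ ^ n ≠ 1

/-- The shift `σ̄` on real sequences. -/
def shiftR (w : ℤ → ℝ) : ℤ → ℝ := fun n => w (n + 1)

/-- `σ̄^k` on real sequences. -/
def shiftIterR (k : ℤ) (w : ℤ → ℝ) : ℤ → ℝ := fun n => w (n + k)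

/-- Membership in `W_f = f(σ̄)^{-1}(ℓ^∞(ℤ,ℤ))`. -/
def InWf (f : Polynomial ℤ) (w : ℤ → ℝ) : Prop :=
  Bdd w ∧ ∀ n, ∃ z : ℤ, fsR f w n = (z : ℝ)

/-- `Y_f = W_f ∩ [0,1)^ℤ`. -/
def YfSet (f : Polynomial ℤ) : Set (ℤ → ℝ) :=
  {w | InWf f w ∧ ∀ n, w n ∈ Set.Ico (0:ℝ) 1}

/-- `Z̄_f = f(σ̄)(Ȳ_f)`, where `Ȳ_f` is the closure of `Y_f` in the topology of
coordinatewise convergence. -/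
def ZbarR (f : Polynomial ℤ) : Set (ℤ → ℝ) := fsR f '' closure (YfSet f)

/-- The circle `ℝ/ℤ`. -/
abbrev Torus := AddCircle (1 : ℝ)

/-- The shift `σ` on `𝕋^ℤ`. -/
def shiftT (x : ℤ → Torus) : ℤ → Torus := fun n => x (n + 1)

/-- `f(σ)` acting on `𝕋^ℤ`. -/
def fsT (f : Polynomial ℤ) (x : ℤ → Torus) : ℤ → Torus :=
  fun n => ∑ k ∈ Finset.range (f.natDegree + 1), f.coeff k • x (n + (k : ℤ))

/-- `X_f = ker f(σ) ⊆ 𝕋^ℤ`. -/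
def Xf (f : Polynomial ℤ) : Set (ℤ → Torus) := {x | ∀ n, fsT f x n = 0}

section SignPatterns

lemma sum_choose_le_pow (n d : ℕ) : ∑ k ∈ Finset.Iic d, n.choose k ≤ (n + 1) ^ d := by
  rw [add_pow, ← Nat.range_succ_eq_Iic]
  refine Finset.sum_le_sum fun k hk => ?_
  have hkd : k ≤ d := by simpa [Nat.lt_succ_iff] using hk
  calc n.choose k ≤ n ^ k := Nat.choose_le_pow n k
    _ ≤ n ^ k * 1 ^ (d - k) * (d.choose k) := by
      simpa using Nat.le_mul_of_pos_right _ (Nat.choose_pos hkd)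

/-- The set system cut out by affine functionals `a i + ℓ i` shatters only sets whose size is at
most the rank of the linear parts `ℓ i`. -/
lemma card_le_finrank_of_shatters {ι E : Type*} [Fintype ι] [DecidableEq ι] [AddCommGroup E]
    [Module ℝ E] (ℓ : ι → Module.Dual ℝ E) (a : ι → ℝ) (𝒜 : Finset (Finset ι))
    (h𝒜 : ∀ t ∈ 𝒜, ∃ v : E, ∀ i, i ∈ t ↔ 0 ≤ a i + ℓ i v) {s : Finset ι} (hs : 𝒜.Shatters s) :
    s.card ≤ Module.finrank ℝ (Submodule.span ℝ (Set.range ℓ)) := by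
  by_contra hcard
  have hdep : ¬ LinearIndependent ℝ (fun i : s => ℓ i) := by
    intro hli
    have h1 := finrank_span_eq_card hli
    have h2 : Submodule.span ℝ (Set.range fun i : s => ℓ i) ≤ Submodule.span ℝ (Set.range ℓ) :=
      Submodule.span_mono (by rintro _ ⟨i, rfl⟩; exact ⟨i, rfl⟩)
    have := FiniteDimensional.span_of_finite ℝ (Set.finite_range ℓ)
    have h3 := Submodule.finrank_mono h2
    rw [h1, Fintype.card_coe] at h3
    exact hcard h3
  obtain ⟨g, hg, i₀, hi₀⟩ := Fintype.not_linearIndependent_iff.1 hdep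
  have hconst : ∀ v : E, ∑ i : s, g i * (a i + ℓ i v) = ∑ i : s, g i * a i := by
    intro v
    have hv := congrArg (fun φ : Module.Dual ℝ E => φ v) hg
    simp only [LinearMap.sum_apply, LinearMap.smul_apply, smul_eq_mul, LinearMap.zero_apply] at hv
    simp only [mul_add, Finset.sum_add_distrib, hv, add_zero]
  have key : ∀ p : s → Prop, ∃ v : E, ∀ i : s, p i ↔ 0 ≤ a i + ℓ i v := by
    intro p
    classical
    obtain ⟨u, hu, hsu⟩ := hs (t := s.filter fun i => ∃ h : i ∈ s, p ⟨i, h⟩)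
      (Finset.filter_subset _ _)
    obtain ⟨v, hv⟩ := h𝒜 u hu
    refine ⟨v, fun i => ?_⟩
    rw [← hv]
    have := Finset.ext_iff.1 hsu i
    simp only [Finset.mem_inter, Finset.mem_filter, i.2, true_and, exists_true_left] at this
    exact this.symm
  obtain ⟨v, hv⟩ := key fun i => 0 < g i
  obtain ⟨v', hv'⟩ := key fun i => g i < 0
  have hterm : ∀ i : s, g i * (a i + ℓ i v') ≤ g i * (a i + ℓ i v) := by
    intro i
    rcases lt_trichotomy (g i) 0 with h | h | h
    · have h1 := (hv' i).1 h
      have h2 := mt (hv i).2 (not_lt.2 h.le)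
      nlinarith
    · simp [h]
    · have h1 := (hv i).1 h
      have h2 := mt (hv' i).2 (not_lt.2 h.le)
      nlinarith
  have hstrict : g i₀ * (a i₀ + ℓ i₀ v') < g i₀ * (a i₀ + ℓ i₀ v) := by
    rcases lt_or_gt_of_ne hi₀ with h | h
    · have h1 := (hv' i₀).1 h
      have h2 := mt (hv i₀).2 (not_lt.2 h.le)
      nlinarith
    · have h1 := (hv i₀).1 h
      have h2 := mt (hv' i₀).2 (not_lt.2 h.le)
      nlinarith
  have := Finset.sum_lt_sum (fun i _ => hterm i) ⟨i₀, Finset.mem_univ _, hstrict⟩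
  rw [hconst, hconst] at this
  exact lt_irrefl _ this

/-- An arrangement of affine hyperplanes whose linear parts have rank `d` realizes polynomially
many sign patterns. -/
lemma card_signPatterns_le {ι E : Type*} [Fintype ι] [AddCommGroup E]
    [Module ℝ E] (ℓ : ι → Module.Dual ℝ E) (a : ι → ℝ) {d : ℕ}
    (hd : Module.finrank ℝ (Submodule.span ℝ (Set.range ℓ)) ≤ d) (𝒜 : Finset (Finset ι))
    (h𝒜 : ∀ t ∈ 𝒜, ∃ v : E, ∀ i, i ∈ t ↔ 0 ≤ a i + ℓ i v) :
    𝒜.card ≤ (Fintype.card ι + 1) ^ d := by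
  classical
  have hvc : 𝒜.vcDim ≤ d := Finset.sup_le fun s hs =>
    (card_le_finrank_of_shatters ℓ a 𝒜 h𝒜 (Finset.mem_shatterer.1 hs)).trans hd
  calc 𝒜.card ≤ 𝒜.shatterer.card := Finset.card_le_card_shatterer 𝒜
    _ ≤ ∑ k ∈ Finset.Iic 𝒜.vcDim, (Fintype.card ι).choose k := Finset.card_shatterer_le_sum_vcDim
    _ ≤ (Fintype.card ι + 1) ^ 𝒜.vcDim := sum_choose_le_pow _ _
    _ ≤ (Fintype.card ι + 1) ^ d := Nat.pow_le_pow_right (Nat.succ_pos _) hvc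

end SignPatterns

section Entropy

open Dynamics ExpGrowth Uniformity

lemma expGrowthSup_polynomial (C d : ℕ) :
    expGrowthSup (fun n : ℕ => (((C * n + 1) ^ d : ℕ) : ENNReal)) = 0 := by
  apply le_antisymm
  · rw [expGrowthSup_le_iff]
    intro b hb
    obtain ⟨c, hc0, hcb⟩ := EReal.lt_iff_exists_real_btwn.1 hb
    have hc : 0 < c := by exact_mod_cast hc0
    have hlo := (((isLittleO_pow_exp_pos_mul_atTop d hc).const_mul_left ((C + 1 : ℝ) ^ d)).bound
      one_pos)
    filter_upwards [tendsto_natCast_atTop_atTop.eventually hlo, eventually_ge_atTop 1] with n hn hn1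
    have hreal : (((C * n + 1) ^ d : ℕ) : ℝ) ≤ Real.exp (c * n) := by
      have h1 : (1 : ℝ) ≤ n := by exact_mod_cast hn1
      calc (((C * n + 1) ^ d : ℕ) : ℝ) = ((C : ℝ) * n + 1) ^ d := by push_cast; rfl
        _ ≤ ((C + 1 : ℝ) * n) ^ d := by
          refine pow_le_pow_left₀ (by positivity) ?_ d
          linarith
        _ = (C + 1 : ℝ) ^ d * (n : ℝ) ^ d := mul_pow _ _ _
        _ ≤ Real.exp (c * n) := by
          rw [one_mul, Real.norm_of_nonneg (by positivity), Real.norm_of_nonneg (by positivity)]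
            at hn
          exact hn
    calc (((C * n + 1) ^ d : ℕ) : ENNReal) = ENNReal.ofReal (((C * n + 1) ^ d : ℕ) : ℝ) :=
          (ENNReal.ofReal_natCast _).symm
      _ ≤ ENNReal.ofReal (Real.exp (c * n)) := ENNReal.ofReal_le_ofReal hreal
      _ = EReal.exp ((c : EReal) * n) := by
        rw [← EReal.exp_coe]; push_cast; rfl
      _ ≤ EReal.exp (b * n) := EReal.exp_monotone (by gcongr)
  · rw [← expGrowthSup_const (b := 1) one_ne_zero ENNReal.one_ne_top]
    refine expGrowthSup_monotone fun n => ?_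
    exact_mod_cast Nat.one_le_pow _ _ (Nat.succ_pos _)

/-- A map whose fibres over dynamical balls admit covers of polynomial size does not decrease
the entropy. -/
lemma coverEntropy_le_of_polynomial_fibers {X Y : Type*} [UniformSpace X] [UniformSpace Y]
    {S : X → X} {T : Y → Y} {φ : X → Y} {F : Set X} {G : Set Y} (hφ : Set.MapsTo φ F G)
    (h : ∀ U ∈ 𝓤 X, ∃ V ∈ 𝓤 Y, ∃ C d : ℕ, ∀ n : ℕ, 0 < n → ∀ y : Y, ∃ s : Finset X,
      s.card ≤ (C * n + 1) ^ d ∧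
        IsDynCoverOf S {x ∈ F | (φ x, y) ∈ dynEntourage T V n} U n s) :
    coverEntropy S F ≤ coverEntropy T G := by
  refine iSup₂_le fun U hU => ?_
  obtain ⟨V, hV, C, d, hs⟩ := h U hU
  refine le_trans ?_ (coverEntropyEntourage_le_coverEntropy T G hV)
  have hmin : ∀ n : ℕ, 0 < n →
      coverMincard S F U n ≤ coverMincard T G V n * ((C * n + 1) ^ d : ℕ) := by
    intro n hn
    rcases eq_or_ne (coverMincard T G V n) ⊤ with htop | htop
    · rw [htop, ENat.top_mul]
      · exact le_top
      · exact_mod_cast (pow_pos (Nat.succ_pos _) _).ne'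
    · obtain ⟨t, ht, htc⟩ := (coverMincard_finite_iff T G V n).1 (lt_top_iff_ne_top.2 htop)
      choose s hcard hcov using hs n hn
      classical
      have hc : IsDynCoverOf S F U n (t.biUnion s : Finset X) := by
        intro x hx
        obtain ⟨y, hyt, hxy⟩ := ht (hφ hx)
        obtain ⟨z, hz, hxz⟩ := hcov y ⟨hx, hxy⟩
        exact ⟨z, Finset.mem_coe.2 (Finset.mem_biUnion.2 ⟨y, hyt, hz⟩), hxz⟩
      refine hc.coverMincard_le_card.trans ?_
      rw [← htc]
      exact_mod_cast Finset.card_biUnion_le_card_mul _ _ _ fun y _ => hcard y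
  have hz := expGrowthSup_polynomial C d
  calc coverEntropyEntourage S F U
      ≤ expGrowthSup ((fun n : ℕ => ((coverMincard T G V n : ℕ∞) : ENNReal)) *
          fun n : ℕ => (((C * n + 1) ^ d : ℕ) : ENNReal)) := by
        refine expGrowthSup_eventually_monotone ?_
        filter_upwards [eventually_gt_atTop 0] with n hn
        simpa using ENat.toENNReal_mono (hmin n hn)
    _ ≤ coverEntropyEntourage T G V + 0 := by
        rw [← hz]
        exact expGrowthSup_mul_le (Or.inr (by rw [hz]; exact EReal.zero_ne_top))
          (Or.inr (by rw [hz]; exact EReal.zero_ne_bot))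
    _ = coverEntropyEntourage T G V := add_zero _

/-- A set on which finitely many sign patterns determine points up to `(U, n)`-closeness has a
dynamical cover with one point for each pattern. -/
lemma exists_isDynCoverOf_of_signPatterns {X ι E : Type*} [Fintype ι]
    [AddCommGroup E] [Module ℝ E] (ℓ : ι → Module.Dual ℝ E) (a : ι → ℝ) {d : ℕ}
    (hd : Module.finrank ℝ (Submodule.span ℝ (Set.range ℓ)) ≤ d)
    {S : X → X} {A : Set X} {U : SetRel X X} {n : ℕ} (v : X → ι → ℝ)
    (hv : ∀ x ∈ A, ∃ e : E, ∀ i, ℓ i e = v x i)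
    (hclose : ∀ x ∈ A, ∀ y ∈ A, (∀ i, 0 ≤ a i + v x i ↔ 0 ≤ a i + v y i) →
      (x, y) ∈ dynEntourage S U n) :
    ∃ s : Finset X, s.card ≤ (Fintype.card ι + 1) ^ d ∧ IsDynCoverOf S A U n s := by
  classical
  let P : X → Finset ι := fun x => Finset.univ.filter fun i => 0 ≤ a i + v x i
  have hP : ∀ x i, i ∈ P x ↔ 0 ≤ a i + v x i := fun x i => by simp [P]
  let 𝒜 : Finset (Finset ι) := (Set.toFinite (P '' A)).toFinset
  have hmem : ∀ t, t ∈ 𝒜 ↔ ∃ x ∈ A, P x = t := fun t => by simp [𝒜]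
  have hcard : 𝒜.card ≤ (Fintype.card ι + 1) ^ d := by
    refine card_signPatterns_le ℓ a hd 𝒜 fun t ht => ?_
    obtain ⟨x, hx, rfl⟩ := (hmem t).1 ht
    obtain ⟨e, he⟩ := hv x hx
    exact ⟨e, fun i => by rw [hP, he]⟩
  choose r hrA hrP using fun t : 𝒜 => (hmem t).1 t.2
  refine ⟨𝒜.attach.image r, Finset.card_image_le.trans (by simpa using hcard), fun x hx => ?_⟩
  have hx𝒜 : P x ∈ 𝒜 := (hmem _).2 ⟨x, hx, rfl⟩
  refine ⟨r ⟨P x, hx𝒜⟩, by simp, hclose x hx _ (hrA _) fun i => ?_⟩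
  rw [← hP, ← hP, hrP]

end Entropy

section Windows

open Dynamics Uniformity

/-- Pairs of sequences that are `δ`-close on the window `[a, b]`. -/
def windowEntourage {α : Type*} [PseudoMetricSpace α] (a b : ℤ) (δ : ℝ) :
    SetRel (ℤ → α) (ℤ → α) :=
  {p | ∀ j ∈ Finset.Icc a b, dist (p.1 j) (p.2 j) < δ}

lemma iterate_shift_apply {α : Type*} {S : (ℤ → α) → ℤ → α} (hS : ∀ x j, S x j = x (j + 1)) (k : ℕ)
    (x : ℤ → α) (j : ℤ) : S^[k] x j = x (j + k) := by
  induction k generalizing j with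
  | zero => simp
  | succ k ih =>
    rw [Function.iterate_succ_apply', hS, ih]
    congr 1
    push_cast
    ring

variable {α : Type*} [PseudoMetricSpace α]

lemma windowEntourage_mem_uniformity (a b : ℤ) {δ : ℝ} (hδ : 0 < δ) :
    (windowEntourage a b δ : SetRel (ℤ → α) (ℤ → α)) ∈ 𝓤 (ℤ → α) := by
  have : ∀ᶠ p : (ℤ → α) × (ℤ → α) in 𝓤 (ℤ → α),
      ∀ j ∈ Finset.Icc a b, dist (p.1 j) (p.2 j) < δ :=
    (Finset.eventually_all _).2 fun j _ =>
      (Pi.uniformContinuous_proj (fun _ : ℤ => α) j).eventually (Metric.dist_mem_uniformity hδ)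
  exact this

lemma exists_windowEntourage_subset {U : SetRel (ℤ → α) (ℤ → α)} (hU : U ∈ 𝓤 (ℤ → α)) :
    ∃ N : ℕ, ∃ ε > 0, windowEntourage (-N : ℤ) N ε ⊆ U := by
  rw [Pi.uniformity] at hU
  obtain ⟨⟨I, r⟩, ⟨hI, hr⟩, hsub⟩ := (HasBasis.iInf' fun i : ℤ =>
    (Metric.uniformity_basis_dist (α := α)).comap
      (fun a : (ℤ → α) × (ℤ → α) => (a.1 i, a.2 i))).mem_iff.1 hU
  obtain ⟨N, hN⟩ : ∃ N : ℕ, ∀ i ∈ I, i.natAbs ≤ N := by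
    obtain ⟨N, hN⟩ := (hI.image Int.natAbs).bddAbove
    exact ⟨N, fun i hi => hN ⟨i, hi, rfl⟩⟩
  obtain ⟨ε, hε, hεr⟩ : ∃ ε > 0, ∀ i ∈ I, ε ≤ r i := by
    have : ∀ᶠ ε in 𝓝[>] (0 : ℝ), ∀ i ∈ I, ε ≤ r i := (hI.eventually_all).2 fun i hi =>
      eventually_nhdsWithin_of_eventually_nhds (eventually_le_nhds (hr i hi))
    obtain ⟨ε, h1, h2⟩ := (this.and self_mem_nhdsWithin).exists
    exact ⟨ε, h2, h1⟩
  refine ⟨N, ε, hε, fun p hp => hsub ?_⟩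
  simp only [Set.mem_iInter, Set.mem_preimage]
  intro i hi
  refine (hp i ?_).trans_le (hεr i hi)
  have := hN i hi
  rw [Finset.mem_Icc]
  omega

lemma mem_dynEntourage_windowEntourage {S : (ℤ → α) → ℤ → α} (hS : ∀ x j, S x j = x (j + 1))
    {a b : ℤ} (hab : a ≤ b) {δ : ℝ} {n : ℕ} (hn : 0 < n) {x y : ℤ → α} :
    (x, y) ∈ dynEntourage S (windowEntourage a b δ) n ↔
      ∀ i, a ≤ i → i < b + n → dist (x i) (y i) < δ := by
  simp only [mem_dynEntourage, windowEntourage, Set.mem_ofPred_eq, iterate_shift_apply hS,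
    Finset.mem_Icc]
  constructor
  · intro h i hai hib
    rcases le_or_gt i b with hi | hi
    · simpa using h 0 hn i ⟨hai, hi⟩
    · have := h (i - b).toNat (by omega) b ⟨hab, le_rfl⟩
      rwa [Int.toNat_of_nonneg (by omega), add_sub_cancel] at this
  · intro h k hk j hj
    exact h _ (by omega) (by omega)

end Windows

section Recurrence

/-- Real sequences annihilated by `f(σ̄)` on the window `[p, q)`. -/
def recSpace (f : Polynomial ℤ) (p q : ℤ) : Submodule ℝ (ℤ → ℝ) where
  carrier := {v | ∀ j, p ≤ j → j < q → fsR f v j = 0}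
  zero_mem' := fun j _ _ => by simp [fsR]
  add_mem' := fun {v w} hv hw j h1 h2 => by
    have := hv j h1 h2
    have := hw j h1 h2
    simp only [fsR, Pi.add_apply, mul_add, Finset.sum_add_distrib] at *
    linarith
  smul_mem' := fun c v hv j h1 h2 => by
    have := hv j h1 h2
    simp only [fsR, Pi.smul_apply, smul_eq_mul] at *
    simp_rw [mul_left_comm _ c, ← Finset.mul_sum, this, mul_zero]

/-- Evaluation at `k` as a functional on `recSpace f p q`. -/
def recEval (f : Polynomial ℤ) (p q k : ℤ) : Module.Dual ℝ (recSpace f p q) :=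
  (LinearMap.proj k).comp (recSpace f p q).subtype

lemma recEval_mem_span (f : Polynomial ℤ) (hf : f ≠ 0) (p q : ℤ) (j : ℕ)
    (hj : p + j < q + f.natDegree) :
    recEval f p q (p + j) ∈
      Submodule.span ℝ (Set.range fun i : Fin f.natDegree => recEval f p q (p + (i : ℕ))) := by
  induction j using Nat.strong_induction_on with
  | _ j ih =>
    rcases lt_or_ge j f.natDegree with h | h
    · exact Submodule.subset_span ⟨⟨j, h⟩, rfl⟩
    · have hlc : (f.coeff f.natDegree : ℝ) ≠ 0 := by
        exact_mod_cast Polynomial.leadingCoeff_ne_zero.2 hf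
      obtain ⟨l, rfl⟩ := Nat.exists_eq_add_of_le h
      have hrel : recEval f p q (p + ((f.natDegree + l : ℕ) : ℤ)) =
          (-(f.coeff f.natDegree : ℝ)⁻¹) • ∑ k ∈ Finset.range f.natDegree,
            (f.coeff k : ℝ) • recEval f p q (p + ((k + l : ℕ) : ℤ)) := by
        ext v
        have hv := v.2 (p + l) (by omega) (by push_cast at hj; omega)
        rw [fsR, Finset.sum_range_succ] at hv
        have hadd : ∀ k : ℕ, p + ((k + l : ℕ) : ℤ) = p + l + k := fun k => by push_cast; ring
        simp only [recEval, LinearMap.smul_apply, LinearMap.sum_apply, LinearMap.comp_apply,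
          LinearMap.proj_apply, Submodule.subtype_apply, smul_eq_mul, hadd]
        rw [eq_neg_of_add_eq_zero_left hv]
        field_simp
      rw [hrel]
      refine Submodule.smul_mem _ _ (Submodule.sum_mem _ fun k hk => Submodule.smul_mem _ _ ?_)
      have hk' := Finset.mem_range.1 hk
      exact ih (k + l) (by omega) (by push_cast at hj ⊢; omega)

lemma finrank_span_recEval_le (f : Polynomial ℤ) (hf : f ≠ 0) (p q : ℤ) {ι : Type*} (c : ι → ℤ)
    (hc : ∀ i, p ≤ c i ∧ c i < q) :
    Module.finrank ℝ (Submodule.span ℝ (Set.range fun i => recEval f p q (c i))) ≤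
      f.natDegree := by
  have hle : Submodule.span ℝ (Set.range fun i => recEval f p q (c i)) ≤
      Submodule.span ℝ (Set.range fun i : Fin f.natDegree => recEval f p q (p + (i : ℕ))) := by
    rw [Submodule.span_le]
    rintro _ ⟨i, rfl⟩
    have h := recEval_mem_span f hf p q (c i - p).toNat (by have := hc i; omega)
    rwa [Int.toNat_of_nonneg (by have := hc i; omega), add_sub_cancel] at h
  have := FiniteDimensional.span_of_finite ℝ
    (Set.finite_range fun i : Fin f.natDegree => recEval f p q (p + (i : ℕ)))
  refine (Submodule.finrank_mono hle).trans ?_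
  exact (finrank_range_le_card (R := ℝ)
    fun i : Fin f.natDegree => recEval f p q (p + (i : ℕ))).trans (Fintype.card_fin _).le

lemma fsR_sub (f : Polynomial ℤ) (v w : ℤ → ℝ) : fsR f (v - w) = fsR f v - fsR f w := by
  ext n
  simp [fsR, mul_sub]

lemma abs_fsR_le (f : Polynomial ℤ) (v : ℤ → ℝ) (n : ℤ) {r : ℝ}
    (hv : ∀ k ≤ f.natDegree, |v (n + k)| ≤ r) :
    |fsR f v n| ≤ (∑ k ∈ Finset.range (f.natDegree + 1), |(f.coeff k : ℝ)|) * r := by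
  rw [fsR, Finset.sum_mul]
  refine (Finset.abs_sum_le_sum_abs _ _).trans (Finset.sum_le_sum fun k hk => ?_)
  rw [abs_mul]
  exact mul_le_mul_of_nonneg_left (hv k (by simpa [Nat.lt_succ_iff] using hk)) (abs_nonneg _)

lemma uniformContinuous_fsR (f : Polynomial ℤ) : UniformContinuous (fsR f) := by
  rw [uniformContinuous_pi]
  intro n
  unfold fsR
  induction Finset.range (f.natDegree + 1) using Finset.induction_on with
  | empty => simpa using uniformContinuous_const
  | insert k s hk ih =>
    simp_rw [Finset.sum_insert hk]
    exact ((uniformContinuous_const_smul (f.coeff k : ℝ)).comp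
      (Pi.uniformContinuous_proj (fun _ : ℤ => ℝ) (n + k))).add ih

end Recurrence

section Comparison

open Dynamics Uniformity

lemma eq_of_isInt_of_abs_sub_lt_one {x y : ℝ} (hx : ∃ z : ℤ, x = z) (hy : ∃ z : ℤ, y = z)
    (h : |x - y| < 1) : x = y := by
  obtain ⟨a, rfl⟩ := hx
  obtain ⟨b, rfl⟩ := hy
  have : |a - b| < 1 := by exact_mod_cast h
  rw [Int.abs_lt_one_iff, sub_eq_zero] at this
  rw [this]

/-- The factor map from `Y_f` to `Z̄_f` does not lower the entropy. -/
lemma coverEntropy_Yf_le_Zbar (f : Polynomial ℤ) (hf : f ≠ 0) :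
    coverEntropy shiftR (YfSet f) ≤ coverEntropy shiftR (ZbarR f) := by
  refine coverEntropy_le_of_polynomial_fibers (φ := fsR f)
    (fun w hw => ⟨w, subset_closure hw, rfl⟩) fun U hU => ?_
  obtain ⟨N, ε, hε, hNU⟩ := exists_windowEntourage_subset hU
  obtain ⟨M, hM⟩ := exists_nat_one_div_lt hε
  refine ⟨windowEntourage (-N) N (1 / 2), windowEntourage_mem_uniformity _ _ (by norm_num),
    (2 * N + 1) * (M + 1), f.natDegree, fun n hn y => ?_⟩
  have hNN : (-N : ℤ) ≤ N := by omega
  set A : Set (ℤ → ℝ) :=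
    {w ∈ YfSet f | (fsR f w, y) ∈ dynEntourage shiftR (windowEntourage (-N) N (1 / 2)) n}
  rcases A.eq_empty_or_nonempty with hAe | ⟨w₀, hw₀⟩
  · exact ⟨∅, by simp, by simp [hAe]⟩
  have hint : ∀ w ∈ A, w - w₀ ∈ recSpace f (-N) (N + n) := by
    intro w hw j h1 h2
    have hd := (mem_dynEntourage_windowEntourage (fun _ _ => rfl) hNN hn).1 hw.2 j h1 h2
    have hd₀ := (mem_dynEntourage_windowEntourage (fun _ _ => rfl) hNN hn).1 hw₀.2 j h1 h2
    rw [fsR_sub, Pi.sub_apply, sub_eq_zero]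
    refine eq_of_isInt_of_abs_sub_lt_one (hw.1.1.2 j) (hw₀.1.1.2 j) ?_
    rw [Real.dist_eq] at hd hd₀
    rw [abs_lt] at *
    constructor <;> linarith
  let ι := Finset.Ico (-N : ℤ) (N + n) × Fin (M + 1)
  have hι : Fintype.card ι ≤ (2 * N + 1) * (M + 1) * n := by
    have h1 : Fintype.card ι = (2 * N + n) * (M + 1) := by
      simp only [ι, Fintype.card_prod, Fintype.card_coe, Int.card_Ico, Fintype.card_fin]
      congr 1
      omega
    rw [h1]
    nlinarith [Nat.mul_le_mul (Nat.mul_le_mul (le_refl (2 * N)) hn) (le_refl (M + 1))]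
  obtain ⟨s, hs, hcov⟩ := exists_isDynCoverOf_of_signPatterns (S := shiftR) (A := A) (U := U)
    (n := n) (ι := ι) (d := f.natDegree)
    (fun i => recEval f (-N) (N + n) i.1) (fun i => w₀ i.1 - (i.2 : ℕ) / (M + 1 : ℝ))
    (finrank_span_recEval_le f hf _ _ _ fun i => Finset.mem_Ico.1 i.1.2)
    (fun w i => (w - w₀) i.1) (fun w hw => ⟨⟨w - w₀, hint w hw⟩, fun i => rfl⟩)
    (fun w hw w' hw' hpat => by
      refine dynEntourage_monotone _ _ hNU
        ((mem_dynEntourage_windowEntourage (fun _ _ => rfl) hNN hn).2 fun k h1 h2 => ?_)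
      have hlevel : ∀ j : ℕ, j < M + 1 → ((j : ℝ) / (M + 1) ≤ w k ↔ (j : ℝ) / (M + 1) ≤ w' k) := by
        intro j hj
        have := hpat (⟨k, Finset.mem_Ico.2 ⟨h1, h2⟩⟩, ⟨j, hj⟩)
        simp only [Pi.sub_apply] at this
        constructor
        · intro h
          linarith [this.1 (by linarith)]
        · intro h
          linarith [this.2 (by linarith)]
      have hM0 : (0 : ℝ) < M + 1 := by positivity
      have hstep : ∀ u u' : ℤ → ℝ, u k ∈ Set.Ico (0 : ℝ) 1 →
          (∀ j : ℕ, j < M + 1 → (j : ℝ) / (M + 1) ≤ u k → (j : ℝ) / (M + 1) ≤ u' k) →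
          u k < u' k + 1 / (M + 1) := by
        intro u u' hu huu'
        have hfl := Nat.floor_le (mul_nonneg hu.1 hM0.le)
        have hlt := Nat.lt_floor_add_one (u k * (M + 1 : ℝ))
        have hj : ⌊u k * (M + 1 : ℝ)⌋₊ < M + 1 := by
          rw [Nat.floor_lt (mul_nonneg hu.1 hM0.le)]
          push_cast
          nlinarith [hu.2]
        have h3 := huu' _ hj ((div_le_iff₀ hM0).2 hfl)
        have h4 : u k < (⌊u k * (M + 1 : ℝ)⌋₊ : ℝ) / (M + 1) + 1 / (M + 1) := by
          rw [← add_div, lt_div_iff₀ hM0]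
          exact hlt
        linarith
      have h3 := hstep w w' (hw.1.2 k) fun j hj => (hlevel j hj).1
      have h4 := hstep w' w (hw'.1.2 k) fun j hj => (hlevel j hj).2
      rw [Real.dist_eq, abs_lt]
      constructor <;> linarith)
  exact ⟨s, hs.trans (Nat.pow_le_pow_left (Nat.succ_le_succ hι) _), hcov⟩

/-- If `x = t + z` with `z ∈ ℤ`, `x ∈ [0, 1)` and `|t| < 1`, then `x` is determined by `t` and its
sign. -/
lemma eq_of_add_int_mem_Ico {x t : ℝ} {z : ℤ} (hx : x ∈ Set.Ico (0 : ℝ) 1) (ht : |t| < 1)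
    (h : x = t + z) : (0 ≤ t → x = t) ∧ (t < 0 → x = t + 1) := by
  rw [abs_lt] at ht
  obtain ⟨hx0, hx1⟩ := hx
  constructor
  · intro h0
    have h1 : z < 1 := by exact_mod_cast (by linarith : (z : ℝ) < 1)
    have h2 : -1 < z := by exact_mod_cast (by linarith : (-1 : ℝ) < z)
    obtain rfl : z = 0 := by omega
    simpa using h
  · intro h0
    have h1 : z < 2 := by exact_mod_cast (by linarith : (z : ℝ) < 2)
    have h2 : 0 < z := by exact_mod_cast (by linarith : (0 : ℝ) < z)
    obtain rfl : z = 1 := by omega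
    simpa using h

/-- Reduction modulo `1`. -/
def toTorus (w : ℤ → ℝ) : ℤ → Torus := fun n => (w n : Torus)

lemma fsT_toTorus (f : Polynomial ℤ) (w : ℤ → ℝ) (n : ℤ) :
    fsT f (toTorus w) n = ((fsR f w n : ℝ) : Torus) := by
  simp only [fsT, fsR, toTorus]
  rw [QuotientAddGroup.mk_sum]
  refine Finset.sum_congr rfl fun k _ => ?_
  rw [← zsmul_eq_mul]
  rfl

lemma coe_torus_eq_zero_iff {x : ℝ} : (x : Torus) = 0 ↔ ∃ z : ℤ, x = z := by
  rw [AddCircle.coe_eq_zero_iff]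
  simp [eq_comm]

lemma image_toTorus_YfSet (f : Polynomial ℤ) : toTorus '' YfSet f = Xf f := by
  ext x
  constructor
  · rintro ⟨w, hw, rfl⟩ n
    rw [fsT_toTorus, coe_torus_eq_zero_iff]
    exact hw.1.2 n
  · intro hx
    have : Fact ((0 : ℝ) < 1) := ⟨one_pos⟩
    let w : ℤ → ℝ := fun n => AddCircle.equivIco 1 0 (x n)
    have hw : ∀ n, w n ∈ Set.Ico (0 : ℝ) 1 := fun n => by
      simpa using (AddCircle.equivIco (1 : ℝ) 0 (x n)).2
    have hwx : toTorus w = x := funext fun n => AddCircle.coe_equivIco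
    refine ⟨w, ⟨⟨⟨1, fun n => ?_⟩, fun n => ?_⟩, hw⟩, hwx⟩
    · rw [abs_of_nonneg (hw n).1]
      exact (hw n).2.le
    · rw [← coe_torus_eq_zero_iff, ← fsT_toTorus, hwx]
      exact hx n

lemma uniformContinuous_toTorus : UniformContinuous toTorus := by
  rw [uniformContinuous_pi]
  intro n
  refine UniformContinuous.comp (g := fun x : ℝ => (x : Torus)) ?_
    (Pi.uniformContinuous_proj (fun _ : ℤ => ℝ) n)
  exact uniformContinuous_of_continuousAt_zero
    (QuotientAddGroup.mk' (AddSubgroup.zmultiples (1 : ℝ)))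
    (AddCircle.continuous_mk' 1).continuousAt

/-- Reduction modulo `1` from `Y_f` to `X_f` does not lower the entropy. -/
lemma coverEntropy_Yf_le_Xf (f : Polynomial ℤ) (hf : f ≠ 0) :
    coverEntropy shiftR (YfSet f) ≤ coverEntropy shiftT (Xf f) := by
  refine coverEntropy_le_of_polynomial_fibers (φ := toTorus)
    (fun w hw => image_toTorus_YfSet f ▸ Set.mem_image_of_mem _ hw) fun U hU => ?_
  obtain ⟨N, ε, hε, hNU⟩ := exists_windowEntourage_subset hU
  set B : ℝ := ∑ k ∈ Finset.range (f.natDegree + 1), |(f.coeff k : ℝ)|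
  have hB : 0 ≤ B := Finset.sum_nonneg fun k _ => abs_nonneg _
  obtain ⟨δ, hδ0, hδ1, hδε, hδB⟩ :
      ∃ δ > 0, δ ≤ 1 / 4 ∧ δ ≤ ε / 4 ∧ δ ≤ 1 / (2 * (B + 1)) :=
    ⟨min (1 / 4) (min (ε / 4) (1 / (2 * (B + 1)))), by positivity, min_le_left _ _,
      (min_le_right _ _).trans (min_le_left _ _), (min_le_right _ _).trans (min_le_right _ _)⟩
  have hBδ : B * (2 * δ) < 1 := by
    rw [le_div_iff₀ (by positivity)] at hδB
    nlinarith
  refine ⟨windowEntourage (-N) (N + f.natDegree) δ, windowEntourage_mem_uniformity _ _ hδ0,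
    2 * N + 1, f.natDegree, fun n hn y => ?_⟩
  have hNN : (-N : ℤ) ≤ N := by omega
  have hNm : (-N : ℤ) ≤ N + f.natDegree := by omega
  set A : Set (ℤ → ℝ) := {w ∈ YfSet f |
    (toTorus w, y) ∈ dynEntourage shiftT (windowEntourage (-N) (N + f.natDegree) δ) n}
  rcases A.eq_empty_or_nonempty with hAe | ⟨w₀, hw₀⟩
  · exact ⟨∅, by simp, by simp [hAe]⟩
  let e : (ℤ → ℝ) → ℤ → ℝ := fun w k => round (w k - w₀ k)
  let v : (ℤ → ℝ) → ℤ → ℝ := fun w => w - w₀ - e w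
  have hsmall : ∀ w ∈ A, ∀ k : ℤ, -N ≤ k → k < N + f.natDegree + n → |v w k| < 2 * δ := by
    intro w hw k h1 h2
    have hd := (mem_dynEntourage_windowEntourage (fun _ _ => rfl) hNm hn).1 hw.2 k h1 h2
    have hd₀ := (mem_dynEntourage_windowEntourage (fun _ _ => rfl) hNm hn).1 hw₀.2 k h1 h2
    have hvk : |v w k| = dist (toTorus w k) (toTorus w₀ k) := by
      rw [dist_eq_norm]
      exact (UnitAddCircle.norm_eq (x := w k - w₀ k)).symm
    rw [hvk]
    linarith [dist_triangle_right (toTorus w k) (toTorus w₀ k) (y k)]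
  have hrec : ∀ w ∈ A, v w ∈ recSpace f (-N) (N + n) := by
    intro w hw j h1 h2
    have hle := abs_fsR_le f (v w) j (r := 2 * δ) fun k hk =>
      (hsmall w hw (j + k) (by omega) (by omega)).le
    refine eq_of_isInt_of_abs_sub_lt_one ?_ ⟨0, by simp⟩ (by rw [sub_zero]; exact hle.trans_lt hBδ)
    obtain ⟨z, hz⟩ := hw.1.1.2 j
    obtain ⟨z₀, hz₀⟩ := hw₀.1.1.2 j
    refine ⟨z - z₀ - ∑ k ∈ Finset.range (f.natDegree + 1),
      f.coeff k * round (w (j + k) - w₀ (j + k)), ?_⟩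
    simp only [v, fsR_sub, Pi.sub_apply, hz, hz₀]
    push_cast
    rfl
  let a : ℤ → ℝ := fun k => w₀ k - round (w₀ k)
  have ha : ∀ k, |a k| ≤ 1 / 2 := fun k => abs_sub_round (w₀ k)
  have hdecomp : ∀ w k, w k = (a k + v w k) + ((round (w₀ k) + round (w k - w₀ k) : ℤ) : ℝ) := by
    intro w k
    simp only [a, v, e, Pi.sub_apply]
    push_cast
    ring
  let ι := Finset.Ico (-N : ℤ) (N + n)
  have hι : Fintype.card ι ≤ (2 * N + 1) * n := by
    have h1 : Fintype.card ι = 2 * N + n := by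
      simp only [ι, Fintype.card_coe, Int.card_Ico]
      omega
    rw [h1]
    nlinarith
  obtain ⟨s, hs, hcov⟩ := exists_isDynCoverOf_of_signPatterns (S := shiftR) (A := A) (U := U)
    (n := n) (ι := ι) (d := f.natDegree)
    (fun i => recEval f (-N) (N + n) i) (fun i => a i)
    (finrank_span_recEval_le f hf _ _ _ fun i => Finset.mem_Ico.1 i.2)
    (fun w i => v w i) (fun w hw => ⟨⟨v w, hrec w hw⟩, fun i => rfl⟩)
    (fun w hw w' hw' hpat => by
      refine dynEntourage_monotone _ _ hNU
        ((mem_dynEntourage_windowEntourage (fun _ _ => rfl) hNN hn).2 fun k h1 h2 => ?_)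
      have hp := hpat ⟨k, Finset.mem_Ico.2 ⟨h1, h2⟩⟩
      have hv := hsmall w hw k h1 (by omega)
      have hv' := hsmall w' hw' k h1 (by omega)
      have hbound : ∀ t : ℝ, |t| < 2 * δ → |a k + t| < 1 := fun t ht =>
        (abs_add_le _ _).trans_lt (by linarith [ha k])
      have hw1 := eq_of_add_int_mem_Ico (hw.1.2 k) (hbound _ hv) (hdecomp w k)
      have hw2 := eq_of_add_int_mem_Ico (hw'.1.2 k) (hbound _ hv') (hdecomp w' k)
      have hdiff : w k - w' k = v w k - v w' k := by
        rcases le_or_gt 0 (a k + v w k) with h | h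
        · rw [hw1.1 h, hw2.1 (hp.1 h)]
          ring
        · rw [hw1.2 h, hw2.2 (not_le.1 fun h' => not_le.2 h (hp.2 h'))]
          ring
      rw [Real.dist_eq, hdiff]
      rw [abs_lt] at *
      constructor <;> linarith)
  exact ⟨s, hs.trans (Nat.pow_le_pow_left (Nat.succ_le_succ hι) _), hcov⟩

lemma continuous_shiftR : Continuous shiftR :=
  continuous_pi fun n => continuous_apply (n + 1)

lemma semiconj_fsR (f : Polynomial ℤ) : Function.Semiconj (fsR f) shiftR shiftR := by
  intro w
  ext n
  simp only [fsR, shiftR]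
  refine Finset.sum_congr rfl fun k _ => ?_
  rw [add_right_comm]

lemma semiconj_toTorus : Function.Semiconj toTorus shiftR shiftT := fun _ => rfl

end Comparison

/-- `h(σ̄|_{Ȳ_f}) = h(σ̄|_{Z̄_f}) = h(α_f)`, all entropies being topological
entropies with respect to the topology of coordinatewise convergence. -/
theorem entropy_Ybar_Zbar (f : Polynomial ℤ) (hm : 1 ≤ f.natDegree)
    (hlead : 0 < f.leadingCoeff) (h0 : f.coeff 0 ≠ 0)
    (hirr : Irreducible (Polynomial.toLaurent f)) (hnc : Noncyclotomic f) :
    Dynamics.coverEntropy shiftR (closure (YfSet f)) =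
      Dynamics.coverEntropy shiftR (ZbarR f) ∧
    Dynamics.coverEntropy shiftR (ZbarR f) =
      Dynamics.coverEntropy shiftT (Xf f) := by
  have hf : f ≠ 0 := fun h => h0 (by simp [h])
  have hYZ : Dynamics.coverEntropy shiftR (closure (YfSet f)) =
      Dynamics.coverEntropy shiftR (ZbarR f) := by
    refine le_antisymm ?_ (Dynamics.coverEntropy_image_le_of_uniformContinuous (semiconj_fsR f)
      (uniformContinuous_fsR f) _)
    rw [Dynamics.coverEntropy_closure continuous_shiftR]
    exact coverEntropy_Yf_le_Zbar f hf
  refine ⟨hYZ, ?_⟩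
  rw [← hYZ, Dynamics.coverEntropy_closure continuous_shiftR]
  refine le_antisymm (coverEntropy_Yf_le_Xf f hf) ?_
  rw [← image_toTorus_YfSet]
  exact Dynamics.coverEntropy_image_le_of_uniformContinuous semiconj_toTorus uniformContinuous_toTorus _

end
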